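/- Let σ > 0 and let B, ξ be real numbers. Then ∫_0^∞ ln[ (1 + ((e^B − 1)/2)·erfc((η + ξ)/σ)) · (1 + ((e^{−B} − 1)/2)·erfc((η − ξ)/σ)) ] dη = −B·ξ + σ·∫_0^∞ ln(1 + sinh²(B/2)·erfc(η)·erfc(−η)) dη. -/

import Mathlib

open MeasureTheory Real

/-- The complementary error function `erfc(x) = (2/√π) ∫_x^∞ e^{−u²} du`. -/
noncomputable def erfc (x : ℝ) : ℝ := (2 / Real.sqrt π) * ∫ u in Set.Ioi x, Real.exp (-u ^ 2)

/-!
The left-hand integrand is `f (η / σ + ξ / σ) + g (η / σ - ξ / σ)` with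
`f x = log (1 + (exp B - 1) / 2 * erfc x)` and `g` the same function for `-B`. Since
`erfc x + erfc (-x) = 2`, we have `g (-x) = f x - B`. Shifting `f` to the left by `a` removes
`∫ x in 0..a, f x` from its integral, whereas shifting `g` to the right by `a` adds
`∫ x in -a..0, g x = ∫ x in 0..a, (f x - B)`. Only `-a * B` survives, which is `-B * ξ` once
`a = ξ / σ` is scaled back by `σ`.
-/

open Filter Asymptotics Topology

section HalfLine

variable {E : Type*} [NormedAddCommGroup E]

lemma integrableOn_Ioi_comp_add_right {f : ℝ → E} {a b : ℝ}
    (hf : IntegrableOn f (Set.Ioi (a + b))) :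
    IntegrableOn (fun x => f (x + b)) (Set.Ioi a) := by
  simpa [Function.comp_def] using
    ((measurePreserving_add_right volume b).integrableOn_comp_preimage
      (measurableEmbedding_addRight b)).2 hf

lemma intervalIntegrable_of_forall_integrableOn_Ioi {f : ℝ → E}
    (hf : ∀ c, IntegrableOn f (Set.Ioi c)) (a b : ℝ) : IntervalIntegrable f volume a b :=
  intervalIntegrable_iff.2 ((hf (min a b)).mono_set Set.Ioc_subset_Ioi_self)

variable [NormedSpace ℝ E]

lemma integral_Ioi_comp_add_right (f : ℝ → E) (a b : ℝ) :
    ∫ x in Set.Ioi a, f (x + b) = ∫ x in Set.Ioi (a + b), f x := by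
  simpa using (measurePreserving_add_right volume b).setIntegral_preimage_emb
    (measurableEmbedding_addRight b) f (Set.Ioi (a + b))

lemma integral_Ioi_comp_div (f : ℝ → E) (a : ℝ) {b : ℝ} (hb : 0 < b) :
    ∫ x in Set.Ioi a, f (x / b) = b • ∫ x in Set.Ioi (a / b), f x := by
  simpa [div_eq_mul_inv] using integral_comp_mul_right_Ioi f a (inv_pos.2 hb)

lemma integral_Ioi_comp_add_add_comp_sub [CompleteSpace E] {f g : ℝ → E} {c : E}
    (hf : ∀ b, IntegrableOn f (Set.Ioi b)) (hg : ∀ b, IntegrableOn g (Set.Ioi b))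
    (hfg : ∀ x, g (-x) = f x + c) (a : ℝ) :
    ∫ x in Set.Ioi 0, (f (x + a) + g (x - a)) = a • c + ∫ x in Set.Ioi 0, (f x + g x) := by
  have hf_shift : ∫ x in Set.Ioi 0, f (x + a) =
      (∫ x in Set.Ioi 0, f x) - ∫ x in 0..a, f x := by
    rw [integral_Ioi_comp_add_right, zero_add,
      ← intervalIntegral.integral_Ioi_sub_Ioi' (hf 0) (hf a), sub_sub_cancel]
  have hg_shift : ∫ x in Set.Ioi 0, g (x - a) =
      (∫ x in -a..0, g x) + ∫ x in Set.Ioi 0, g x := by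
    simp_rw [sub_eq_add_neg]
    rw [integral_Ioi_comp_add_right, zero_add,
      intervalIntegral.integral_interval_add_Ioi (hg (-a)) (hg 0)]
  have hg_reflect : ∫ x in -a..0, g x = (∫ x in 0..a, f x) + a • c := by
    calc ∫ x in -a..0, g x = ∫ x in 0..a, g (-x) := by
          rw [intervalIntegral.integral_comp_neg, neg_zero]
      _ = ∫ x in 0..a, (f x + c) := by simp_rw [hfg]
      _ = (∫ x in 0..a, f x) + a • c := by
          rw [intervalIntegral.integral_add
            (intervalIntegrable_of_forall_integrableOn_Ioi hf 0 a) intervalIntegrable_const,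
            intervalIntegral.integral_const, sub_zero]
  have hg_sub : IntegrableOn (fun x => g (x - a)) (Set.Ioi 0) := by
    simpa only [sub_eq_add_neg] using integrableOn_Ioi_comp_add_right (hg (0 + -a))
  rw [integral_add (integrableOn_Ioi_comp_add_right (hf (0 + a))) hg_sub,
    integral_add (hf 0) (hg 0), hf_shift, hg_shift, hg_reflect]
  abel

end HalfLine

lemma integrable_exp_neg_sq : Integrable fun u : ℝ => exp (-u ^ 2) := by
  simpa using integrable_exp_neg_mul_sq one_pos

lemma erfc_pos (x : ℝ) : 0 < erfc x := by
  have : NeZero (volume.restrict (Set.Ioi x)) := ⟨by simp⟩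
  exact mul_pos (by positivity) (integral_exp_pos integrable_exp_neg_sq.integrableOn)

lemma erfc_add_erfc_neg (x : ℝ) : erfc x + erfc (-x) = 2 := by
  have h_reflect : ∫ u in Set.Ioi (-x), exp (-u ^ 2) = ∫ u in Set.Iic x, exp (-u ^ 2) := by
    rw [← integral_comp_neg_Iic]
    simp only [neg_sq]
  have h_total : (∫ u in Set.Iic x, exp (-u ^ 2)) + ∫ u in Set.Ioi x, exp (-u ^ 2) = √π := by
    rw [intervalIntegral.integral_Iic_add_Ioi integrable_exp_neg_sq.integrableOn
      integrable_exp_neg_sq.integrableOn]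
    simpa using integral_gaussian 1
  rw [erfc, erfc, h_reflect, ← mul_add, add_comm, h_total, div_mul_cancel₀ _ (by positivity)]

lemma continuous_erfc : Continuous erfc := by
  have h_primitive : erfc = fun x => erfc 0 - 2 / √π * ∫ u in 0..x, exp (-u ^ 2) := by
    funext x
    rw [erfc, erfc, ← intervalIntegral.integral_Ioi_sub_Ioi'
      integrable_exp_neg_sq.integrableOn integrable_exp_neg_sq.integrableOn]
    ring
  rw [h_primitive]
  exact continuous_const.sub (continuous_const.mul
    (intervalIntegral.continuous_primitive
      (fun _ _ => integrable_exp_neg_sq.intervalIntegrable) 0))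

lemma erfc_le_const_mul_exp_neg (x : ℝ) : erfc x ≤ 2 / √π * exp (1 / 4) * exp (-x) := by
  have h_le (u : ℝ) : exp (-u ^ 2) ≤ exp (1 / 4) * exp (-u) := by
    rw [← exp_add, exp_le_exp]
    linarith [sq_nonneg (u - 1 / 2)]
  have h_integral : ∫ u in Set.Ioi x, exp (-u ^ 2) ≤ exp (1 / 4) * exp (-x) := by
    rw [← integral_exp_neg_Ioi x, ← integral_const_mul]
    exact integral_mono integrable_exp_neg_sq.integrableOn
      ((integrableOn_exp_neg_Ioi x).const_mul _) h_le
  rw [erfc, mul_assoc]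
  gcongr

lemma erfc_isBigO_exp_neg : erfc =O[atTop] fun x => exp (-x) :=
  .of_bound (2 / √π * exp (1 / 4)) <| .of_forall fun x => by
    rw [norm_of_nonneg (erfc_pos x).le, norm_of_nonneg (exp_pos _).le]
    exact erfc_le_const_mul_exp_neg x

lemma tendsto_erfc_atTop : Tendsto erfc atTop (𝓝 0) :=
  erfc_isBigO_exp_neg.trans_tendsto tendsto_exp_neg_atTop_nhds_zero

/-- The moment generating function at `B` of a Bernoulli variable with success probability
`erfc x / 2`; its logarithms for `B` and `-B` make up the integrand of the quenched generating
function. -/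
noncomputable def erfcMGF (B x : ℝ) : ℝ := 1 + (exp B - 1) / 2 * erfc x

lemma erfcMGF_eq_average (B x : ℝ) : erfcMGF B x = (erfc (-x) + exp B * erfc x) / 2 := by
  rw [erfcMGF]
  linarith [erfc_add_erfc_neg x]

lemma erfcMGF_pos (B x : ℝ) : 0 < erfcMGF B x := by
  have h_pos := erfc_pos x
  have h_neg_pos := erfc_pos (-x)
  rw [erfcMGF_eq_average]
  positivity

lemma erfcMGF_neg_neg (B x : ℝ) : erfcMGF (-B) (-x) = exp (-B) * erfcMGF B x := by
  have h_exp : exp (-B) * exp B = 1 := by rw [← exp_add, neg_add_cancel, exp_zero]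
  rw [erfcMGF_eq_average, erfcMGF_eq_average, neg_neg]
  linear_combination (-erfc x / 2) * h_exp

lemma log_erfcMGF_neg_neg (B x : ℝ) :
    log (erfcMGF (-B) (-x)) = log (erfcMGF B x) + -B := by
  rw [erfcMGF_neg_neg, log_mul (exp_pos _).ne' (erfcMGF_pos B x).ne', log_exp, add_comm]

lemma sinh_half_sq (x : ℝ) : sinh (x / 2) ^ 2 = (cosh x - 1) / 2 := by
  have h_cosh := cosh_two_mul (x / 2)
  rw [mul_div_cancel₀ x two_ne_zero, cosh_sq] at h_cosh
  linarith

lemma erfcMGF_mul_erfcMGF_neg (B x : ℝ) :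
    erfcMGF B x * erfcMGF (-B) x = 1 + sinh (B / 2) ^ 2 * erfc x * erfc (-x) := by
  have h_exp : exp B * exp (-B) = 1 := by rw [← exp_add, add_neg_cancel, exp_zero]
  have h_erfc : erfc (-x) = 2 - erfc x := by linarith [erfc_add_erfc_neg x]
  rw [erfcMGF, erfcMGF, sinh_half_sq, cosh_eq, h_erfc]
  linear_combination (erfc x ^ 2 / 4) * h_exp

lemma continuous_log_erfcMGF (B : ℝ) : Continuous fun x => log (erfcMGF B x) :=
  (continuous_const.add (continuous_const.mul continuous_erfc)).log
    fun x => (erfcMGF_pos B x).ne'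

lemma log_erfcMGF_isBigO_erfc (B : ℝ) : (fun x => log (erfcMGF B x)) =O[atTop] erfc := by
  have h_tendsto : Tendsto (erfcMGF B) atTop (𝓝 1) := by
    simpa [funext (erfcMGF.eq_def B)] using
      (tendsto_erfc_atTop.const_mul ((exp B - 1) / 2)).const_add 1
  have h_log : log =O[𝓝 1] fun y => y - 1 := by
    simpa using (hasDerivAt_log one_ne_zero).isBigO_sub
  have h_sub : (fun x => erfcMGF B x - 1) =O[atTop] erfc := by
    simpa [erfcMGF] using isBigO_const_mul_self ((exp B - 1) / 2) erfc atTop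
  exact (h_log.comp_tendsto h_tendsto).trans h_sub

lemma integrableOn_log_erfcMGF (B c : ℝ) :
    IntegrableOn (fun x => log (erfcMGF B x)) (Set.Ioi c) :=
  integrable_of_isBigO_exp_neg one_pos (continuous_log_erfcMGF B).continuousOn <| by
    simpa using (log_erfcMGF_isBigO_erfc B).trans erfc_isBigO_exp_neg

/-- The quenched generating function in symmetric `sinh²` form:
`∫_0^∞ ln[(1 + ((e^B−1)/2)erfc((η+ξ)/σ))(1 + ((e^{−B}−1)/2)erfc((η−ξ)/σ))] dη
  = −Bξ + σ ∫_0^∞ ln(1 + sinh²(B/2)erfc(η)erfc(−η)) dη`. -/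
theorem quenched_sinh_form (σ : ℝ) (hσ : 0 < σ) (B ξ : ℝ) :
    (∫ η in Set.Ioi (0 : ℝ),
        Real.log ((1 + (Real.exp B - 1) / 2 * erfc ((η + ξ) / σ)) *
          (1 + (Real.exp (-B) - 1) / 2 * erfc ((η - ξ) / σ))))
      = -(B * ξ) + σ * ∫ η in Set.Ioi (0 : ℝ),
          Real.log (1 + Real.sinh (B / 2) ^ 2 * erfc η * erfc (-η)) := by
  calc
    _ = ∫ η in Set.Ioi 0,
          (log (erfcMGF B (η / σ + ξ / σ)) + log (erfcMGF (-B) (η / σ - ξ / σ))) := by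
      simp_rw [← erfcMGF.eq_def, log_mul (erfcMGF_pos B _).ne' (erfcMGF_pos (-B) _).ne',
        add_div, sub_div]
    _ = σ * ∫ x in Set.Ioi 0,
          (log (erfcMGF B (x + ξ / σ)) + log (erfcMGF (-B) (x - ξ / σ))) := by
      simpa only [zero_div, smul_eq_mul] using integral_Ioi_comp_div
        (fun x => log (erfcMGF B (x + ξ / σ)) + log (erfcMGF (-B) (x - ξ / σ))) 0 hσ
    _ = σ * (ξ / σ * -B + ∫ x in Set.Ioi 0,
          (log (erfcMGF B x) + log (erfcMGF (-B) x))) := by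
      rw [integral_Ioi_comp_add_add_comp_sub (integrableOn_log_erfcMGF B)
        (integrableOn_log_erfcMGF (-B)) (log_erfcMGF_neg_neg B), smul_eq_mul]
    _ = -(B * ξ) + σ * ∫ x in Set.Ioi 0,
          log (1 + sinh (B / 2) ^ 2 * erfc x * erfc (-x)) := by
      simp_rw [← erfcMGF_mul_erfcMGF_neg, log_mul (erfcMGF_pos B _).ne' (erfcMGF_pos (-B) _).ne']
      field_simp
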